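/- For t ∈ (0,1), the interpolating free energy α̃_N(t) is differentiable in t and its derivative is d/dt α̃_N(t) = N⁻¹ E( f_1 f_2 ⋯ f_K · Z̃_N⁻¹ ∂_t Z̃_N ), where Z̃_N⁻¹ ∂_t Z̃_N = (β/(2√(tN))) Σ_{i<j} J_{ij} ω(σ_i σ_j) − (β/(2√(1−t))) Σ_{a=1}^K √(q_a − q_{a−1}) Σ_i J_i^a ω(σ_i), ω being the Gibbs state associated to the interpolating Boltzmann factor at parameter t. -/

import Mathlib

open MeasureTheory ProbabilityTheory Filter

noncomputable section

/-! ## Gaussian disorder -/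

/-- The standard (centered, unit variance) Gaussian measure on `ℝ`. -/
def stdGauss : Measure ℝ := gaussianReal 0 1

instance : IsProbabilityMeasure stdGauss := by unfold stdGauss; infer_instance

/-- `N` i.i.d. standard Gaussian variables. -/
def gaussN (N : ℕ) : Measure (Fin N → ℝ) := Measure.pi fun _ => stdGauss

instance (N : ℕ) : IsProbabilityMeasure (gaussN N) := by unfold gaussN; infer_instance

/-- The i.i.d. standard Gaussian couplings `J_{ij}` (only entries with `i < j` are used). -/
def gaussC (N : ℕ) : Measure (Fin N → Fin N → ℝ) := Measure.pi fun _ => gaussN N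

instance (N : ℕ) : IsProbabilityMeasure (gaussC N) := by unfold gaussC; infer_instance

/-- The i.i.d. standard Gaussian one-body fields `J_i^a`, `a = 1, …, K`
(row `⟨a-1⟩ : Fin K` corresponds to the level `a` of the paper). -/
def gaussS (K N : ℕ) : Measure (Fin K → Fin N → ℝ) := Measure.pi fun _ => gaussN N

instance (K N : ℕ) : IsProbabilityMeasure (gaussS K N) := by unfold gaussS; infer_instance

/-- I.i.d. standard Gaussian couplings indexed by subsets of sites, for the p-spin model
(only the cardinality-`p` subsets are used). -/
def gaussP (N : ℕ) : Measure (Finset (Fin N) → ℝ) := Measure.pi fun _ => stdGauss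

instance (N : ℕ) : IsProbabilityMeasure (gaussP N) := by unfold gaussP; infer_instance

/-! ## Spins and overlaps -/

/-- The spin value (`±1`) of a Boolean configuration entry. -/
def spin (b : Bool) : ℝ := if b then 1 else -1

/-- The overlap `q₁₂ = N⁻¹ ∑ᵢ σᵢ⁽¹⁾ σᵢ⁽²⁾` of two replicas. -/
def overlap (N : ℕ) (σ τ : Fin N → Bool) : ℝ := (N : ℝ)⁻¹ * ∑ i, spin (σ i) * spin (τ i)

/-! ## Piecewise constant functional order parameters and the Parisi function -/

/-- One backward step of the Parisi recursion on an interval of constancy of the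
functional order parameter: from `g = f(q_a, ·)`, with value `m` of the order parameter
and `s = q_a - q`, produce `f(q, ·)`. -/
def pStep (m s : ℝ) (g : ℝ → ℝ) (y : ℝ) : ℝ :=
  if m = 0 then ∫ z, g (y + z * Real.sqrt s) ∂stdGauss
  else m⁻¹ * Real.log (∫ z, Real.exp (m * g (y + z * Real.sqrt s)) ∂stdGauss)

/-- `parisiLevel K q m β j` is the Parisi function `f(q_{K-j}, ·; x, β)` at the node
`q_{K-j}`, obtained by `j` backward steps from the final condition `f(q_K, y) = log cosh (β y)`. -/
def parisiLevel (K : ℕ) (q m : ℕ → ℝ) (β : ℝ) : ℕ → ℝ → ℝ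
  | 0 => fun y => Real.log (Real.cosh (β * y))
  | j + 1 => pStep (m (K - j)) (q (K - j) - q (K - j - 1)) (parisiLevel K q m β j)

/-- The Parisi function `f(r, y; x, β)` for a piecewise constant order parameter `x`
given by nodes `q` and values `m`:  for `q_{a-1} ≤ r ≤ q_a` it is obtained from
`f(q_a, ·)` by one backward step with value `m_a` over a time `q_a - r`. -/
def parisiF (K : ℕ) (q m : ℕ → ℝ) (β : ℝ) (r y : ℝ) : ℝ :=
  pStep (m (sInf {a : ℕ | r ≤ q a})) (q (sInf {a : ℕ | r ≤ q a}) - r)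
    (parisiLevel K q m β (K - sInf {a : ℕ | r ≤ q a})) y

/-- The functional order parameter as a function: `x(r) = m_a` for `q_{a-1} ≤ r < q_a`,
and `x(1) = m_K`. -/
def xFun (K : ℕ) (q m : ℕ → ℝ) (r : ℝ) : ℝ :=
  if 1 ≤ r then m K else m (sInf {a : ℕ | r < q a})

/-- A piecewise constant functional order parameter:
`0 = q_0 ≤ q_1 ≤ … ≤ q_K = 1`, `0 ≤ m_1 ≤ … ≤ m_K ≤ 1`,
with the conventions `m_0 = 0`, `m_{K+1} = 1`. -/
structure OrderParam where
  K : ℕ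
  hK : 1 ≤ K
  q : ℕ → ℝ
  m : ℕ → ℝ
  hq0 : q 0 = 0
  hqK : q K = 1
  hq_mono : ∀ a, a < K → q a ≤ q (a + 1)
  hm0 : m 0 = 0
  hmtop : m (K + 1) = 1
  hm1 : 0 ≤ m 1
  hm_mono : ∀ a, 1 ≤ a → a < K → m a ≤ m (a + 1)
  hmK : m K ≤ 1

/-- Guerra's trial function `ᾱ(β, h; x) = log 2 + f(0, h; x, β) - (β²/2) ∫₀¹ r x(r) dr`. -/
def trialAlpha (K : ℕ) (q m : ℕ → ℝ) (β h : ℝ) : ℝ :=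
  Real.log 2 + parisiLevel K q m β K h - β ^ 2 / 2 * ∫ r in (0 : ℝ)..1, r * xFun K q m r

/-! ## The Sherrington–Kirkpatrick model -/

/-- The SK Hamiltonian `H_N(σ, h, J) = -(1/√N) ∑_{i<j} J_{ij} σ_i σ_j - h ∑_i σ_i`. -/
def hamSK (N : ℕ) (h : ℝ) (Jc : Fin N → Fin N → ℝ) (σ : Fin N → Bool) : ℝ :=
  -(1 / Real.sqrt N) * ∑ i, ∑ j, (if i < j then Jc i j * spin (σ i) * spin (σ j) else 0)
    - h * ∑ i, spin (σ i)

/-- The SK partition function `Z_N(β, h, J)`. -/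
def ZSK (N : ℕ) (β h : ℝ) (Jc : Fin N → Fin N → ℝ) : ℝ :=
  ∑ σ : Fin N → Bool, Real.exp (-(β * hamSK N h Jc σ))

/-- The quenched average `N⁻¹ E log Z_N(β, h, J)`. -/
def quenchedFE (N : ℕ) (β h : ℝ) : ℝ :=
  (N : ℝ)⁻¹ * ∫ Jc, Real.log (ZSK N β h Jc) ∂gaussC N

/-- The ground state energy density `e_N(J, h)`, defined by
`-e_N(J, h) = N⁻¹ min_σ H_N(σ, h, J)`. -/
def eGS (N : ℕ) (h : ℝ) (Jc : Fin N → Fin N → ℝ) : ℝ :=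
  -((N : ℝ)⁻¹ * ⨅ σ : Fin N → Bool, hamSK N h Jc σ)

/-- The quenched ground state energy density `e_N(h) = E(e_N(J, h))`. -/
def eQuenched (N : ℕ) (h : ℝ) : ℝ := ∫ Jc, eGS N h Jc ∂gaussC N

/-! ## The interpolating system -/

/-- The interpolating Boltzmann factor. -/
def bFac (N K : ℕ) (β h t : ℝ) (q : ℕ → ℝ) (Jc : Fin N → Fin N → ℝ)
    (Js : Fin K → Fin N → ℝ) (σ : Fin N → Bool) : ℝ :=
  Real.exp (β * Real.sqrt (t / N) *
        ∑ i, ∑ j, (if i < j then Jc i j * spin (σ i) * spin (σ j) else 0)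
      + β * h * ∑ i, spin (σ i)
      + β * Real.sqrt (1 - t) *
          ∑ a : Fin K, Real.sqrt (q (a.val + 1) - q a.val) * ∑ i, Js a i * spin (σ i))

/-- The interpolating partition function `Z̃_N(β, h; t; x; J)`. -/
def Ztil (N K : ℕ) (β h t : ℝ) (q : ℕ → ℝ) (Jc : Fin N → Fin N → ℝ)
    (Js : Fin K → Fin N → ℝ) : ℝ :=
  ∑ σ : Fin N → Bool, bFac N K β h t q Jc Js σ

/-- `Wrec … j` is the random variable `Z_{K-j}`:  `Z_K = Z̃_N` and
`Z_{a-1} = (E_a (Z_a^{m_a}))^{1/m_a}`, where `E_a` integrates the Gaussian row `J^a`. -/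
def Wrec (N K : ℕ) (β h t : ℝ) (q m : ℕ → ℝ) :
    ℕ → (Fin N → Fin N → ℝ) → (Fin K → Fin N → ℝ) → ℝ
  | 0 => Ztil N K β h t q
  | j + 1 => fun Jc Js =>
      if hj : j < K then
        (∫ g : Fin N → ℝ,
            (Wrec N K β h t q m j Jc (Function.update Js ⟨K - 1 - j, by omega⟩ g)) ^ m (K - j)
          ∂gaussN N) ^ (m (K - j))⁻¹
      else Wrec N K β h t q m j Jc Js

/-- `Zrec … a` is the random variable `Z_a` of the broken replica interpolation. -/
def Zrec (N K : ℕ) (β h t : ℝ) (q m : ℕ → ℝ) (a : ℕ) :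
    (Fin N → Fin N → ℝ) → (Fin K → Fin N → ℝ) → ℝ :=
  Wrec N K β h t q m (K - a)

/-- The interpolating auxiliary function `α̃_N(t) = N⁻¹ E₀ log Z₀`. -/
def atilde (N K : ℕ) (β h : ℝ) (q m : ℕ → ℝ) (t : ℝ) : ℝ :=
  (N : ℝ)⁻¹ * ∫ Jc, Real.log (Wrec N K β h t q m K Jc 0) ∂gaussC N

/-- The normalized weight `f_a = Z_a^{m_a} / E_a(Z_a^{m_a}) = Z_a^{m_a} / Z_{a-1}^{m_a}`. -/
def fWeight (N K : ℕ) (β h t : ℝ) (q m : ℕ → ℝ) (a : ℕ) (Jc : Fin N → Fin N → ℝ)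
    (Js : Fin K → Fin N → ℝ) : ℝ :=
  Zrec N K β h t q m a Jc Js ^ m a / Zrec N K β h t q m (a - 1) Jc Js ^ m a

/-- The Gibbs expectation `ω(A)` of the interpolating Boltzmann factor. -/
def gibbs (N K : ℕ) (β h t : ℝ) (q : ℕ → ℝ) (A : (Fin N → Bool) → ℝ)
    (Jc : Fin N → Fin N → ℝ) (Js : Fin K → Fin N → ℝ) : ℝ :=
  (∑ σ : Fin N → Bool, A σ * bFac N K β h t q Jc Js σ) / Ztil N K β h t q Jc Js

/-- The two-replica Gibbs product expectation `Ω(A)`. -/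
def gibbs2 (N K : ℕ) (β h t : ℝ) (q : ℕ → ℝ) (A : (Fin N → Bool) → (Fin N → Bool) → ℝ)
    (Jc : Fin N → Fin N → ℝ) (Js : Fin K → Fin N → ℝ) : ℝ :=
  (∑ σ : Fin N → Bool, ∑ τ : Fin N → Bool,
      A σ τ * bFac N K β h t q Jc Js σ * bFac N K β h t q Jc Js τ) /
    Ztil N K β h t q Jc Js ^ 2

/-- `omT1 … A j` is the partially averaged state `ω̃_{K-j}(A)`:
`ω̃_K = ω` and `ω̃_{a-1}(·) = E_a (f_a ω̃_a(·))`. -/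
def omT1 (N K : ℕ) (β h t : ℝ) (q m : ℕ → ℝ) (A : (Fin N → Bool) → ℝ) :
    ℕ → (Fin N → Fin N → ℝ) → (Fin K → Fin N → ℝ) → ℝ
  | 0 => gibbs N K β h t q A
  | j + 1 => fun Jc Js =>
      if hj : j < K then
        ∫ g : Fin N → ℝ,
          fWeight N K β h t q m (K - j) Jc (Function.update Js ⟨K - 1 - j, by omega⟩ g) *
            omT1 N K β h t q m A j Jc (Function.update Js ⟨K - 1 - j, by omega⟩ g)
          ∂gaussN N
      else omT1 N K β h t q m A j Jc Js

/-- `omT2 … A j` is the partially averaged two-replica state `Ω̃_{K-j}(A)`: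
`Ω̃_K = Ω` and `Ω̃_{a-1}(·) = E_a (f_a Ω̃_a(·))`. -/
def omT2 (N K : ℕ) (β h t : ℝ) (q m : ℕ → ℝ) (A : (Fin N → Bool) → (Fin N → Bool) → ℝ) :
    ℕ → (Fin N → Fin N → ℝ) → (Fin K → Fin N → ℝ) → ℝ
  | 0 => gibbs2 N K β h t q A
  | j + 1 => fun Jc Js =>
      if hj : j < K then
        ∫ g : Fin N → ℝ,
          fWeight N K β h t q m (K - j) Jc (Function.update Js ⟨K - 1 - j, by omega⟩ g) *
            omT2 N K β h t q m A j Jc (Function.update Js ⟨K - 1 - j, by omega⟩ g)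
          ∂gaussN N
      else omT2 N K β h t q m A j Jc Js

/-- The deformed quenched average `⟨A⟩_a = E(f_1 ⋯ f_a Ω̃_a(A))` at interpolation
parameter `t`, for a function `A` of two replicas. -/
def angA (N K : ℕ) (β h t : ℝ) (q m : ℕ → ℝ) (a : ℕ)
    (A : (Fin N → Bool) → (Fin N → Bool) → ℝ) : ℝ :=
  ∫ Jc, ∫ Js,
      (∏ b ∈ Finset.Icc 1 a, fWeight N K β h t q m b Jc Js) *
        omT2 N K β h t q m A (K - a) Jc Js
    ∂gaussS K N ∂gaussC N

/-! ## Zero temperature (ground state) objects -/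

/-- The zero-temperature Parisi recursion: `parisiLevelBar K q m j` is `f̄(q_{K-j}, ·; x̄)`,
with final condition `f̄(q_K, y) = |y|`. -/
def parisiLevelBar (K : ℕ) (q m : ℕ → ℝ) : ℕ → ℝ → ℝ
  | 0 => fun y => |y|
  | j + 1 => pStep (m (K - j)) (q (K - j) - q (K - j - 1)) (parisiLevelBar K q m j)

/-- A zero-temperature piecewise constant order parameter: nodes
`0 = q_0 ≤ … ≤ q_K = 1` and nondecreasing values `0 ≤ m̄_1 ≤ … ≤ m̄_K`
(no upper bound `1`), with the convention `m̄_0 = 0`. -/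
structure ZeroTParam where
  K : ℕ
  hK : 1 ≤ K
  q : ℕ → ℝ
  m : ℕ → ℝ
  hq0 : q 0 = 0
  hqK : q K = 1
  hq_mono : ∀ a, a < K → q a ≤ q (a + 1)
  hm0 : m 0 = 0
  hm1 : 0 ≤ m 1
  hm_mono : ∀ a, 1 ≤ a → a < K → m a ≤ m (a + 1)

/-- The zero-temperature trial function `α̃(h; x̄) = f̄(0, h; x̄) - (1/2) ∫₀¹ r x̄(r) dr`. -/
def gsTrial (K : ℕ) (q m : ℕ → ℝ) (h : ℝ) : ℝ :=
  parisiLevelBar K q m K h - 1 / 2 * ∫ r in (0 : ℝ)..1, r * xFun K q m r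

/-! ## The p-spin model -/

/-- A piecewise constant functional order parameter on `[0, p/2]`:
`0 = q_0 ≤ … ≤ q_K = p/2` and `0 ≤ m_1 ≤ … ≤ m_K ≤ 1`. -/
structure POrderParam (p : ℕ) where
  K : ℕ
  hK : 1 ≤ K
  q : ℕ → ℝ
  m : ℕ → ℝ
  hq0 : q 0 = 0
  hqK : q K = p / 2
  hq_mono : ∀ a, a < K → q a ≤ q (a + 1)
  hm1 : 0 ≤ m 1
  hm_mono : ∀ a, 1 ≤ a → a < K → m a ≤ m (a + 1)
  hmK : m K ≤ 1

/-- The p-spin Hamiltonian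
`H_N(σ,h,J) = -(p!/(2N^{p-1}))^{1/2} ∑_{i_1<…<i_p} J_{i_1…i_p} σ_{i_1}⋯σ_{i_p} - h ∑_i σ_i`. -/
def hamP (p N : ℕ) (h : ℝ) (J : Finset (Fin N) → ℝ) (σ : Fin N → Bool) : ℝ :=
  -Real.sqrt ((Nat.factorial p : ℝ) / (2 * (N : ℝ) ^ (p - 1))) *
      ∑ S ∈ Finset.powersetCard p (Finset.univ : Finset (Fin N)), J S * ∏ i ∈ S, spin (σ i)
    - h * ∑ i, spin (σ i)

/-- The p-spin partition function. -/
def ZP (p N : ℕ) (β h : ℝ) (J : Finset (Fin N) → ℝ) : ℝ :=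
  ∑ σ : Fin N → Bool, Real.exp (-(β * hamP p N h J σ))

/-- The p-spin quenched average `N⁻¹ E log Z_N^{(p)}(β, h, J)`. -/
def quenchedFEP (p N : ℕ) (β h : ℝ) : ℝ :=
  (N : ℝ)⁻¹ * ∫ J, Real.log (ZP p N β h J) ∂gaussP N

/-- The functional order parameter on `[0, p/2]` as a function. -/
def xFunP (p K : ℕ) (q m : ℕ → ℝ) (r : ℝ) : ℝ :=
  if (p : ℝ) / 2 ≤ r then m K else m (sInf {a : ℕ | r < q a})

/-- The change of variables `q̄(r)` defined by `2r = p q̄^{p-1}`. -/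
def qBar (p : ℕ) (r : ℝ) : ℝ := (2 * r / p) ^ (((p : ℝ) - 1)⁻¹)

/-- The p-spin trial function
`ᾱ_p(β, h; x) = log 2 + f(0, h; x, β) - (β²/2) ∫₀^{p/2} q̄(r) x(r) dr`. -/
def trialAlphaP (p K : ℕ) (q m : ℕ → ℝ) (β h : ℝ) : ℝ :=
  Real.log 2 + parisiLevel K q m β K h
    - β ^ 2 / 2 * ∫ r in (0 : ℝ)..((p : ℝ) / 2), qBar p r * xFunP p K q m r

/-! The logarithmic derivative of `Z_a` in `t` propagates backward through the recursion
`Z_{a-1} = (E_a Z_a^{m_a})^{1/m_a}`: the powers cancel, and `Z_{a-1}⁻¹ ∂_t Z_{a-1}` is the average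
`E_a(f_a Z_a⁻¹ ∂_t Z_a)`. Since `f_1, …, f_{a-1}` do not involve the row `J^a`, Fubini collapses
these nested averages into the single expectation of `f_1 ⋯ f_K Z̃_N⁻¹ ∂_t Z̃_N`.

Every differentiation under an expectation is dominated: locally uniformly in `t`, all the functions
involved, and the inverses of the partition functions, are at most exponential in the norm of the
disorder, a bound which expectations preserve (Jensen's inequality handles the inverses) and which
Gaussian measures integrate. -/

/-! ### Functions of at most exponential growth -/

section Growth

variable {T X Y : Type*} [SeminormedAddCommGroup X] [SeminormedAddCommGroup Y] {l : Filter T}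

theorem isBigO_exp_mul_norm_of_le {C C' : ℝ} (h : C ≤ C') :
    (fun p : T × X ↦ Real.exp (C * ‖p.2‖)) =O[l ×ˢ ⊤] fun p ↦ Real.exp (C' * ‖p.2‖) :=
  .of_norm_le fun _ ↦ by
    rw [Real.norm_of_nonneg (Real.exp_pos _).le]
    gcongr

theorem isBigO_one_exp_norm :
    (fun _ : T × X ↦ (1 : ℝ)) =O[l ×ˢ ⊤] fun p ↦ Real.exp ‖p.2‖ :=
  .of_norm_le fun p ↦ by simp

theorem isBigO_norm_exp_norm :
    (fun p : T × X ↦ ‖p.2‖) =O[l ×ˢ ⊤] fun p ↦ Real.exp ‖p.2‖ :=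
  .of_norm_le fun p ↦ by
    rw [norm_norm]
    linarith [Real.add_one_le_exp ‖p.2‖]

variable [MeasurableSpace X] [MeasurableSpace Y] {F G : T → X → ℝ}

/-- A family of measurable functions is of exponential type along `l`: `|F t x| ≤ B exp (C ‖x‖)`
for all `x` and for `t` eventually in `l`. The filter `l ×ˢ ⊤` encodes uniformity in `x`. -/
structure HasExpGrowth (l : Filter T) (F : T → X → ℝ) : Prop where
  measurable : ∀ᶠ t in l, Measurable (F t)
  isBigO : ∃ C : ℝ, Function.uncurry F =O[l ×ˢ ⊤] fun p ↦ Real.exp (C * ‖p.2‖)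

/-- A family of positive functions which is of exponential type along `l` together with its
inverse. -/
structure HasTwoSidedExpGrowth (l : Filter T) (F : T → X → ℝ) : Prop where
  pos : ∀ᶠ t in l, ∀ x, 0 < F t x
  hasExpGrowth : HasExpGrowth l F
  inv : HasExpGrowth l fun t x ↦ (F t x)⁻¹

namespace HasExpGrowth

theorem of_bound (hm : ∀ᶠ t in l, Measurable (F t)) {B C : ℝ}
    (h : ∀ᶠ t in l, ∀ x, |F t x| ≤ B * Real.exp (C * ‖x‖)) : HasExpGrowth l F :=
  ⟨hm, C, .of_bound B <| mem_prod_top.2 <| h.mono fun t ht x ↦ by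
    simpa only [Set.mem_ofPred_eq, Function.uncurry_apply_pair, Real.norm_eq_abs, Real.abs_exp]
      using ht x⟩

theorem exists_bound (hF : HasExpGrowth l F) :
    ∃ B C : ℝ, 0 ≤ B ∧ 0 ≤ C ∧ ∀ᶠ t in l, ∀ x, |F t x| ≤ B * Real.exp (C * ‖x‖) := by
  obtain ⟨C, hC⟩ := hF.isBigO
  obtain ⟨B, hB0, hB⟩ := (hC.trans (isBigO_exp_mul_norm_of_le (le_max_left C 0))).exists_nonneg
  refine ⟨B, max C 0, hB0, le_max_right C 0, ?_⟩
  filter_upwards [mem_prod_top.1 hB.bound] with t ht x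
  simpa only [Set.mem_ofPred_eq, Function.uncurry_apply_pair, Real.norm_eq_abs, Real.abs_exp]
    using ht x

theorem mono (hG : HasExpGrowth l G) (hm : ∀ᶠ t in l, Measurable (F t))
    (h : ∀ᶠ t in l, ∀ x, |F t x| ≤ G t x) : HasExpGrowth l F := by
  obtain ⟨B, C, -, -, hB⟩ := hG.exists_bound
  refine of_bound hm (B := B) (C := C) ?_
  filter_upwards [h, hB] with t ht hBt x
  exact (ht x).trans ((le_abs_self _).trans (hBt x))

theorem congr (hF : HasExpGrowth l F) (h : ∀ᶠ t in l, F t = G t) : HasExpGrowth l G := by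
  refine ⟨?_, hF.isBigO.imp fun C hC ↦ hC.congr' (mem_prod_top.2 ?_) .rfl⟩
  · filter_upwards [hF.measurable, h] with t ht hFG
    exact hFG ▸ ht
  · filter_upwards [h] with t hFG x
    exact congrFun hFG x

theorem of_isBigO_one {c : T → ℝ} (hc : c =O[l] fun _ ↦ (1 : ℝ)) :
    HasExpGrowth l fun t (_ : X) ↦ c t :=
  ⟨.of_forall fun _ ↦ measurable_const, 1, by
    simpa only [one_mul] using! (hc.comp_tendsto tendsto_fst).trans isBigO_one_exp_norm⟩

theorem const (c : ℝ) : HasExpGrowth l fun _ (_ : X) ↦ c :=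
  of_isBigO_one (Asymptotics.isBigO_const_const c one_ne_zero l)

theorem of_abs_le_mul_norm {f : X → ℝ} (hf : Measurable f) {B : ℝ} (h : ∀ x, |f x| ≤ B * ‖x‖) :
    HasExpGrowth l fun _ ↦ f :=
  ⟨.of_forall fun _ ↦ hf, 1, by
    simp only [one_mul]
    refine .trans (.of_bound B <| .of_forall fun p ↦ ?_) isBigO_norm_exp_norm
    rw [norm_norm]
    exact h p.2⟩

theorem mul (hF : HasExpGrowth l F) (hG : HasExpGrowth l G) :
    HasExpGrowth l fun t x ↦ F t x * G t x := by
  obtain ⟨C, hC⟩ := hF.isBigO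
  obtain ⟨C', hC'⟩ := hG.isBigO
  refine ⟨?_, C + C', by simpa only [add_mul, Real.exp_add] using! hC.mul hC'⟩
  filter_upwards [hF.measurable, hG.measurable] with t h h' using h.mul h'

theorem add (hF : HasExpGrowth l F) (hG : HasExpGrowth l G) :
    HasExpGrowth l fun t x ↦ F t x + G t x := by
  obtain ⟨C, hC⟩ := hF.isBigO
  obtain ⟨C', hC'⟩ := hG.isBigO
  refine ⟨?_, max C C', (hC.trans (isBigO_exp_mul_norm_of_le (le_max_left C C'))).add
    (hC'.trans (isBigO_exp_mul_norm_of_le (le_max_right C C')))⟩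
  filter_upwards [hF.measurable, hG.measurable] with t h h' using h.add h'

theorem sub (hF : HasExpGrowth l F) (hG : HasExpGrowth l G) :
    HasExpGrowth l fun t x ↦ F t x - G t x := by
  simpa only [neg_one_mul, sub_eq_add_neg] using hF.add ((const (-1)).mul hG)

theorem sum {ι : Type*} (s : Finset ι) {F : ι → T → X → ℝ}
    (hF : ∀ i ∈ s, HasExpGrowth l (F i)) : HasExpGrowth l fun t x ↦ ∑ i ∈ s, F i t x := by
  classical
  induction s using Finset.induction_on with
  | empty => simpa using const 0
  | insert i s hi ih =>
    simp only [Finset.sum_insert hi]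
    exact (hF i (s.mem_insert_self i)).add (ih fun j hj ↦ hF j (Finset.mem_insert_of_mem hj))

theorem prod {ι : Type*} (s : Finset ι) {F : ι → T → X → ℝ}
    (hF : ∀ i ∈ s, HasExpGrowth l (F i)) : HasExpGrowth l fun t x ↦ ∏ i ∈ s, F i t x := by
  classical
  induction s using Finset.induction_on with
  | empty => simpa using const 1
  | insert i s hi ih =>
    simp only [Finset.prod_insert hi]
    exact (hF i (s.mem_insert_self i)).mul (ih fun j hj ↦ hF j (Finset.mem_insert_of_mem hj))

theorem rpow_const (hF : HasExpGrowth l F) (hpos : ∀ᶠ t in l, ∀ x, 0 ≤ F t x) {p : ℝ}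
    (hp : 0 ≤ p) : HasExpGrowth l fun t x ↦ F t x ^ p := by
  obtain ⟨B, C, hB0, -, hB⟩ := hF.exists_bound
  refine of_bound (hF.measurable.mono fun t ht ↦ ht.pow_const p) (B := B ^ p) (C := C * p) ?_
  filter_upwards [hpos, hB] with t h0 hBt x
  have hle : F t x ≤ B * Real.exp (C * ‖x‖) := (le_abs_self _).trans (hBt x)
  calc |F t x ^ p| = F t x ^ p := abs_of_nonneg (Real.rpow_nonneg (h0 x) p)
    _ ≤ (B * Real.exp (C * ‖x‖)) ^ p := Real.rpow_le_rpow (h0 x) hle hp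
    _ = B ^ p * Real.exp (C * p * ‖x‖) := by
      rw [Real.mul_rpow hB0 (Real.exp_pos _).le, ← Real.exp_mul]
      ring_nf

theorem exp_mul {c : T → ℝ} (hc : c =O[l] fun _ ↦ (1 : ℝ)) {f : X → ℝ} (hf : Measurable f)
    {B : ℝ} (h : ∀ x, |f x| ≤ B * ‖x‖) : HasExpGrowth l fun t x ↦ Real.exp (c t * f x) := by
  obtain ⟨C, hC⟩ := hc.bound
  refine of_bound (.of_forall fun t ↦ (hf.const_mul _).exp) (B := 1) (C := C * B) ?_
  filter_upwards [hC] with t ht x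
  rw [norm_one, mul_one, Real.norm_eq_abs] at ht
  rw [Real.abs_exp, one_mul, Real.exp_le_exp, mul_assoc]
  calc c t * f x ≤ |c t| * |f x| := (le_abs_self _).trans (abs_mul _ _).le
    _ ≤ C * (B * ‖x‖) := mul_le_mul ht (h x) (abs_nonneg _) ((abs_nonneg _).trans ht)

theorem comp (hF : HasExpGrowth l F) {φ : Y → X} (hφ : Measurable φ) {A : ℝ}
    (hA : ∀ y, ‖φ y‖ ≤ A + ‖y‖) : HasExpGrowth l fun t y ↦ F t (φ y) := by
  obtain ⟨B, C, hB0, hC, hB⟩ := hF.exists_bound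
  refine of_bound (hF.measurable.mono fun t ht ↦ ht.comp hφ)
    (B := B * Real.exp (C * A)) (C := C) (hB.mono fun t ht y ↦ ?_)
  calc |F t (φ y)| ≤ B * Real.exp (C * ‖φ y‖) := ht (φ y)
    _ ≤ B * Real.exp (C * (A + ‖y‖)) := by
      gcongr
      exact hA y
    _ = B * Real.exp (C * A) * Real.exp (C * ‖y‖) := by
      rw [mul_add, Real.exp_add, mul_assoc]

end HasExpGrowth

namespace HasTwoSidedExpGrowth

theorem log (hF : HasTwoSidedExpGrowth l F) : HasExpGrowth l fun t x ↦ Real.log (F t x) := by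
  refine (hF.hasExpGrowth.add hF.inv).mono
    (hF.hasExpGrowth.measurable.mono fun t ht ↦ ht.log) (hF.pos.mono fun t ht x ↦ abs_le.2 ⟨?_, ?_⟩)
  · have h := Real.log_le_self (inv_nonneg.2 (ht x).le)
    rw [Real.log_inv] at h
    linarith [ht x]
  · linarith [Real.log_le_self (ht x).le, inv_pos.2 (ht x)]

theorem rpow_const (hF : HasTwoSidedExpGrowth l F) (p : ℝ) :
    HasTwoSidedExpGrowth l fun t x ↦ F t x ^ p := by
  have rpow_growth (p : ℝ) : HasExpGrowth l fun t x ↦ F t x ^ p := by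
    rcases le_total 0 p with hp | hp
    · exact hF.hasExpGrowth.rpow_const (hF.pos.mono fun t ht x ↦ (ht x).le) hp
    · refine (hF.inv.rpow_const (hF.pos.mono fun t ht x ↦ (inv_pos.2 (ht x)).le)
        (neg_nonneg.2 hp)).congr (hF.pos.mono fun t ht ↦ funext fun x ↦ ?_)
      rw [Real.inv_rpow (ht x).le, Real.rpow_neg (ht x).le, inv_inv]
  refine ⟨hF.pos.mono fun t ht x ↦ Real.rpow_pos_of_pos (ht x) p, rpow_growth p,
    (rpow_growth (-p)).congr (hF.pos.mono fun t ht ↦ funext fun x ↦ Real.rpow_neg (ht x).le p)⟩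

theorem const {c : ℝ} (hc : 0 < c) : HasTwoSidedExpGrowth l fun _ (_ : X) ↦ c :=
  ⟨.of_forall fun _ _ ↦ hc, .const c, .const c⁻¹⟩

theorem exp_mul {c : T → ℝ} (hc : c =O[l] fun _ ↦ (1 : ℝ)) {f : X → ℝ} (hf : Measurable f)
    {B : ℝ} (h : ∀ x, |f x| ≤ B * ‖x‖) :
    HasTwoSidedExpGrowth l fun t x ↦ Real.exp (c t * f x) where
  pos := .of_forall fun _ _ ↦ Real.exp_pos _
  hasExpGrowth := .exp_mul hc hf h
  inv := by
    simp only [← Real.exp_neg, ← neg_mul]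
    exact .exp_mul hc.neg_left hf h

theorem mul (hF : HasTwoSidedExpGrowth l F) (hG : HasTwoSidedExpGrowth l G) :
    HasTwoSidedExpGrowth l fun t x ↦ F t x * G t x where
  pos := by filter_upwards [hF.pos, hG.pos] with t h h' x using mul_pos (h x) (h' x)
  hasExpGrowth := hF.hasExpGrowth.mul hG.hasExpGrowth
  inv := by simpa only [mul_inv] using hF.inv.mul hG.inv

theorem sum {ι : Type*} {s : Finset ι} (hs : s.Nonempty) {F : ι → T → X → ℝ}
    (hF : ∀ i ∈ s, HasTwoSidedExpGrowth l (F i)) :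
    HasTwoSidedExpGrowth l fun t x ↦ ∑ i ∈ s, F i t x := by
  have hpos : ∀ᶠ t in l, ∀ i ∈ s, ∀ x, 0 < F i t x :=
    (Filter.eventually_all_finset s).2 fun i hi ↦ (hF i hi).pos
  have hsum : HasExpGrowth l fun t x ↦ ∑ i ∈ s, F i t x :=
    .sum s fun i hi ↦ (hF i hi).hasExpGrowth
  obtain ⟨i, hi⟩ := hs
  refine ⟨hpos.mono fun t ht x ↦ Finset.sum_pos (fun j hj ↦ ht j hj x) ⟨i, hi⟩, hsum,
    (hF i hi).inv.mono (hsum.measurable.mono fun t ht ↦ ht.inv) (hpos.mono fun t ht x ↦ ?_)⟩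
  have hle : F i t x ≤ ∑ j ∈ s, F j t x :=
    Finset.single_le_sum (f := fun j ↦ F j t x) (fun j hj ↦ (ht j hj x).le) hi
  rw [abs_of_pos (inv_pos.2 ((ht i hi x).trans_le hle))]
  exact inv_anti₀ (ht i hi x) hle

end HasTwoSidedExpGrowth

end Growth

/-! ### Integrals of functions of exponential growth -/

section ExpMoments

/-- All exponential moments of the norm are finite. This is the integrability condition that
matches `HasExpGrowth`. -/
def HasExpMoments {X : Type*} [Norm X] [MeasurableSpace X] (μ : Measure X) : Prop :=
  ∀ c : ℝ, Integrable (fun x ↦ Real.exp (c * ‖x‖)) μ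

theorem hasExpMoments_gaussianReal (m : ℝ) (v : NNReal) : HasExpMoments (gaussianReal m v) :=
  fun c ↦ by
    refine (integrable_exp_mul_abs (X := id) (integrable_exp_mul_gaussianReal |c|)
      (integrable_exp_mul_gaussianReal (-|c|))).mono' (by fun_prop) (.of_forall fun x ↦ ?_)
    simp only [id, Real.norm_eq_abs, Real.abs_exp]
    gcongr
    exact le_abs_self c

theorem HasExpMoments.pi {ι : Type*} [Fintype ι] {X : ι → Type*}
    [∀ i, SeminormedAddCommGroup (X i)] [∀ i, SecondCountableTopology (X i)]
    [∀ i, MeasurableSpace (X i)] [∀ i, OpensMeasurableSpace (X i)] {μ : ∀ i, Measure (X i)}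
    [∀ i, SigmaFinite (μ i)] (hμ : ∀ i, HasExpMoments (μ i)) : HasExpMoments (Measure.pi μ) := by
  intro c
  refine (Integrable.fintype_prod_dep fun i ↦ hμ i |c|).mono'
    (by fun_prop) (.of_forall fun x ↦ ?_)
  have hx : ‖x‖ ≤ ∑ i, ‖x i‖ := (pi_norm_le_iff_of_nonneg (by positivity)).2 fun i ↦
    Finset.single_le_sum (f := fun i ↦ ‖x i‖) (fun _ _ ↦ norm_nonneg _) (Finset.mem_univ i)
  rw [Real.norm_eq_abs, Real.abs_exp, ← Real.exp_sum, ← Finset.mul_sum]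
  gcongr
  exact le_abs_self c

variable {T X Y : Type*} [SeminormedAddCommGroup X] [MeasurableSpace X]
  [SeminormedAddCommGroup Y] [MeasurableSpace Y] {l : Filter T} {μ : Measure Y}

namespace HasExpGrowth

theorem integrable {F : T → Y → ℝ} (hF : HasExpGrowth l F) (hμ : HasExpMoments μ) :
    ∀ᶠ t in l, Integrable (F t) μ := by
  obtain ⟨B, C, -, -, hB⟩ := hF.exists_bound
  filter_upwards [hF.measurable, hB] with t hm ht
  exact ((hμ C).const_mul B).mono' hm.aestronglyMeasurable (.of_forall ht)

theorem comp_prodMk_left {F : T → X × Y → ℝ} (hF : HasExpGrowth l F) (x : X) :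
    HasExpGrowth l fun t y ↦ F t (x, y) :=
  hF.comp measurable_prodMk_left fun y ↦ max_le_add_of_nonneg (norm_nonneg x) (norm_nonneg y)

theorem comp_prodMk_right {F : T → X × Y → ℝ} (hF : HasExpGrowth l F) (y : Y) :
    HasExpGrowth l fun t x ↦ F t (x, y) :=
  hF.comp measurable_prodMk_right (A := ‖y‖) fun x ↦
    (max_le_add_of_nonneg (norm_nonneg x) (norm_nonneg y)).trans_eq (add_comm _ _)

theorem exists_bound_prod {F : T → X × Y → ℝ} (hF : HasExpGrowth l F) :
    ∃ B C : ℝ, ∀ᶠ t in l, ∀ x y,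
      |F t (x, y)| ≤ B * Real.exp (C * ‖x‖) * Real.exp (C * ‖y‖) := by
  obtain ⟨B, C, hB0, hC, hB⟩ := hF.exists_bound
  refine ⟨B, C, hB.mono fun t ht x y ↦ (ht (x, y)).trans ?_⟩
  rw [mul_assoc, ← Real.exp_add, ← mul_add]
  gcongr
  exact max_le_add_of_nonneg (norm_nonneg x) (norm_nonneg y)

theorem integrable_prodMk {F : T → X × Y → ℝ} (hF : HasExpGrowth l F) (hμ : HasExpMoments μ) :
    ∀ᶠ t in l, ∀ x, Integrable (fun y ↦ F t (x, y)) μ := by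
  obtain ⟨B, C, hB⟩ := hF.exists_bound_prod
  filter_upwards [hF.measurable, hB] with t hm ht x
  exact ((hμ C).const_mul _).mono' (hm.comp measurable_prodMk_left).aestronglyMeasurable
    (.of_forall (ht x))

theorem integral [SFinite μ] {F : T → X × Y → ℝ} (hF : HasExpGrowth l F) (hμ : HasExpMoments μ) :
    HasExpGrowth l fun t x ↦ ∫ y, F t (x, y) ∂μ := by
  obtain ⟨B, C, hB⟩ := hF.exists_bound_prod
  refine of_bound
    (hF.measurable.mono fun t ht ↦ ht.stronglyMeasurable.integral_prod_right'.measurable)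
    (B := B * ∫ y, Real.exp (C * ‖y‖) ∂μ) (C := C) (hB.mono fun t ht x ↦ ?_)
  calc |∫ y, F t (x, y) ∂μ| ≤ ∫ y, B * Real.exp (C * ‖x‖) * Real.exp (C * ‖y‖) ∂μ :=
        norm_integral_le_of_norm_le ((hμ C).const_mul _)
          (.of_forall fun y ↦ (Real.norm_eq_abs _).trans_le (ht x y))
    _ = B * (∫ y, Real.exp (C * ‖y‖) ∂μ) * Real.exp (C * ‖x‖) := by
      rw [integral_const_mul]
      ring

theorem hasDerivAt_integral {F F' : ℝ → Y → ℝ} {t : ℝ} (hF : HasExpGrowth (nhds t) F)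
    (hF' : HasExpGrowth (nhds t) F') (hμ : HasExpMoments μ)
    (hd : ∀ᶠ s in nhds t, ∀ y, HasDerivAt (F · y) (F' s y) s) :
    HasDerivAt (fun s ↦ ∫ y, F s y ∂μ) (∫ y, F' t y ∂μ) t := by
  obtain ⟨B, C, -, -, hB⟩ := hF'.exists_bound
  exact (hasDerivAt_integral_of_dominated_loc_of_deriv_le (hB.and hd)
    (hF.measurable.mono fun s hs ↦ hs.aestronglyMeasurable) (hF.integrable hμ).self_of_nhds
    hF'.measurable.self_of_nhds.aestronglyMeasurable (.of_forall fun y s hs ↦ hs.1 y)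
    ((hμ C).const_mul B) (.of_forall fun y s hs ↦ hs.2 y)).2

end HasExpGrowth

theorem integral_pos_of_pos {X : Type*} [MeasurableSpace X] {μ : Measure X} [NeZero μ] {f : X → ℝ}
    (hpos : ∀ x, 0 < f x) (hf : Integrable f μ) : 0 < ∫ x, f x ∂μ := by
  rw [integral_pos_iff_support_of_nonneg (fun x ↦ (hpos x).le) hf,
    Function.support_eq_univ fun x ↦ (hpos x).ne']
  exact Measure.measure_univ_pos.2 (NeZero.ne μ)

theorem inv_integral_le_integral_inv {X : Type*} [MeasurableSpace X] {μ : Measure X}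
    [IsProbabilityMeasure μ] {f : X → ℝ} (hpos : ∀ x, 0 < f x) (hf : Integrable f μ)
    (hfi : Integrable (fun x ↦ (f x)⁻¹) μ) : (∫ x, f x ∂μ)⁻¹ ≤ ∫ x, (f x)⁻¹ ∂μ := by
  set a := ∫ x, f x ∂μ with ha
  have ha0 : a ≠ 0 := (integral_pos_of_pos hpos hf).ne'
  -- Jensen's inequality, from the tangent line of `u ↦ u⁻¹` at `a`.
  have tangent (x : X) : 2 * a⁻¹ - a⁻¹ ^ 2 * f x ≤ (f x)⁻¹ := by
    have hsq : (f x)⁻¹ - (2 * a⁻¹ - a⁻¹ ^ 2 * f x) = f x * ((f x)⁻¹ - a⁻¹) ^ 2 := by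
      field_simp [(hpos x).ne']
      ring
    linarith [mul_nonneg (hpos x).le (sq_nonneg ((f x)⁻¹ - a⁻¹))]
  calc a⁻¹ = ∫ x, (2 * a⁻¹ - a⁻¹ ^ 2 * f x) ∂μ := by
        rw [integral_sub (integrable_const _) (hf.const_mul _), integral_const_mul _ f, ← ha,
          integral_const, probReal_univ, one_smul]
        field_simp
        ring
    _ ≤ ∫ x, (f x)⁻¹ ∂μ :=
        integral_mono ((integrable_const _).sub (hf.const_mul _)) hfi tangent

namespace HasTwoSidedExpGrowth

theorem comp_prodMk_left {F : T → X × Y → ℝ} (hF : HasTwoSidedExpGrowth l F) (x : X) :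
    HasTwoSidedExpGrowth l fun t y ↦ F t (x, y) :=
  ⟨hF.pos.mono fun _ ht y ↦ ht (x, y), hF.hasExpGrowth.comp_prodMk_left x,
    hF.inv.comp_prodMk_left x⟩

theorem integral [IsProbabilityMeasure μ] {F : T → X × Y → ℝ} (hF : HasTwoSidedExpGrowth l F)
    (hμ : HasExpMoments μ) : HasTwoSidedExpGrowth l fun t x ↦ ∫ y, F t (x, y) ∂μ := by
  have hpos : ∀ᶠ t in l, ∀ x, 0 < ∫ y, F t (x, y) ∂μ := by
    filter_upwards [hF.pos, hF.hasExpGrowth.integrable_prodMk hμ] with t h hint x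
    exact integral_pos_of_pos (fun y ↦ h (x, y)) (hint x)
  have hint : HasExpGrowth l fun t x ↦ ∫ y, F t (x, y) ∂μ := hF.hasExpGrowth.integral hμ
  refine ⟨hpos, hint,
    (hF.inv.integral hμ).mono (hint.measurable.mono fun t ht ↦ ht.inv) ?_⟩
  filter_upwards [hF.pos, hpos, hF.hasExpGrowth.integrable_prodMk hμ,
    hF.inv.integrable_prodMk hμ] with t h hI hi hi' x
  rw [abs_of_pos (inv_pos.2 (hI x))]
  exact inv_integral_le_integral_inv (fun y ↦ h (x, y)) (hi x) (hi' x)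

theorem hasDerivAt_rpow_inv_integral_rpow [IsProbabilityMeasure μ] {F D : ℝ → Y → ℝ} {t p : ℝ}
    (hF : HasTwoSidedExpGrowth (nhds t) F) (hD : HasExpGrowth (nhds t) D) (hμ : HasExpMoments μ)
    (hd : ∀ᶠ s in nhds t, ∀ y, HasDerivAt (F · y) (F s y * D s y) s) (hp : p ≠ 0) :
    HasDerivAt (fun s ↦ (∫ y, F s y ^ p ∂μ) ^ p⁻¹)
      ((∫ y, F t y ^ p ∂μ) ^ p⁻¹ * ∫ y, F t y ^ p / (∫ y', F t y' ^ p ∂μ) * D t y ∂μ) t := by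
  have hFp := hF.rpow_const p
  have hI : 0 < ∫ y, F t y ^ p ∂μ :=
    integral_pos_of_pos hFp.pos.self_of_nhds (hFp.hasExpGrowth.integrable hμ).self_of_nhds
  have hderiv : ∀ᶠ s in nhds t, ∀ y,
      HasDerivAt (F · y ^ p) (p * (F s y ^ p * D s y)) s := by
    filter_upwards [hd, hF.pos] with s hs hpos y
    convert (hs y).rpow_const (p := p) (.inl (hpos y).ne') using 1
    rw [Real.rpow_sub_one (hpos y).ne']
    field_simp [(hpos y).ne']
  have hint : HasDerivAt (fun s ↦ ∫ y, F s y ^ p ∂μ) (∫ y, p * (F t y ^ p * D t y) ∂μ) t :=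
    hFp.hasExpGrowth.hasDerivAt_integral ((HasExpGrowth.const p).mul (hFp.hasExpGrowth.mul hD))
      hμ hderiv
  convert hint.rpow_const (p := p⁻¹) (.inl hI.ne') using 1
  simp only [div_mul_eq_mul_div, integral_div, integral_const_mul]
  rw [Real.rpow_sub_one hI.ne']
  field_simp

end HasTwoSidedExpGrowth

end ExpMoments

/-! ### Averaging over one coordinate of a product measure -/

section Coordinate

variable {ι : Type*} [DecidableEq ι] {X : ι → Type*} [∀ i, MeasurableSpace (X i)]
  {E : Type*} [NormedAddCommGroup E] [NormedSpace ℝ E]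

theorem measurePreserving_prod_update [Fintype ι] (μ : ∀ i, Measure (X i))
    [∀ i, IsProbabilityMeasure (μ i)] (i : ι) :
    MeasurePreserving (fun p : (∀ j, X j) × X i ↦ Function.update p.1 i p.2)
      ((Measure.pi μ).prod (μ i)) (Measure.pi μ) := by
  have hmeas : Measurable fun p : (∀ j, X j) × X i ↦ Function.update p.1 i p.2 :=
    measurable_update'
  refine ⟨hmeas, (Measure.pi_eq fun s hs ↦ ?_).symm⟩
  have hpre : (fun p : (∀ j, X j) × X i ↦ Function.update p.1 i p.2) ⁻¹' Set.univ.pi s =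
      Set.univ.pi (Function.update s i Set.univ) ×ˢ s i := by
    ext ⟨x, y⟩
    simp only [Set.mem_preimage, Set.mem_univ_pi, Set.mem_prod]
    rw [Function.forall_update_iff x (p := fun j z ↦ z ∈ s j),
      Function.forall_update_iff s (p := fun j u ↦ x j ∈ u), and_comm]
    simp
  rw [Measure.map_apply hmeas (.univ_pi hs), hpre, Measure.prod_prod, Measure.pi_pi,
    ← Finset.mul_prod_erase _ _ (Finset.mem_univ i),
    ← Finset.mul_prod_erase _ (fun j ↦ μ j (s j)) (Finset.mem_univ i), mul_comm]
  simp only [Function.update_self, measure_univ, one_mul]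
  congr 1
  refine Finset.prod_congr rfl fun j hj ↦ ?_
  rw [Function.update_of_ne (Finset.ne_of_mem_erase hj)]

theorem integral_integral_update [Fintype ι] {μ : ∀ i, Measure (X i)}
    [∀ i, IsProbabilityMeasure (μ i)] (i : ι) {f : (∀ j, X j) → E}
    (hf : Integrable f (Measure.pi μ)) :
    ∫ x, ∫ y, f (Function.update x i y) ∂μ i ∂Measure.pi μ = ∫ x, f x ∂Measure.pi μ := by
  have hmp := measurePreserving_prod_update μ i
  rw [← integral_prod (fun p ↦ f (Function.update p.1 i p.2))
    (hmp.integrable_comp_of_integrable hf)]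
  conv_rhs => rw [← hmp.map_eq]
  exact (integral_map hmp.measurable.aemeasurable
    (hmp.map_eq.symm ▸ hf.aestronglyMeasurable)).symm

theorem dependsOn_integral_update {i : ι} {s : Set ι} {f : (∀ j, X j) → E}
    (hf : DependsOn f (insert i s)) (ν : Measure (X i)) :
    DependsOn (fun x ↦ ∫ y, f (Function.update x i y) ∂ν) s := by
  intro x x' h
  refine integral_congr_ae (.of_forall fun y ↦ hf fun j hj ↦ ?_)
  rcases eq_or_ne j i with rfl | hji
  · simp only [Function.update_self]
  · simp only [Function.update_of_ne hji, h j (hj.resolve_left hji)]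

end Coordinate

/-! ### The Gibbs state of the interpolating system -/

theorem hasExpMoments_gaussN (N : ℕ) : HasExpMoments (gaussN N) :=
  .pi fun _ ↦ hasExpMoments_gaussianReal 0 1

theorem hasExpMoments_gaussC (N : ℕ) : HasExpMoments (gaussC N) :=
  .pi fun _ ↦ hasExpMoments_gaussN N

theorem hasExpMoments_gaussS (K N : ℕ) : HasExpMoments (gaussS K N) :=
  .pi fun _ ↦ hasExpMoments_gaussN N

/-- The space of all disorder variables: the couplings `J_{ij}` and the fields `J_i^a`. -/
abbrev Disorder (N K : ℕ) : Type := (Fin N → Fin N → ℝ) × (Fin K → Fin N → ℝ)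

/-- The two-body energy `∑_{i<j} J_{ij} σ_i σ_j`. -/
def pairEnergy {N : ℕ} (Jc : Fin N → Fin N → ℝ) (σ : Fin N → Bool) : ℝ :=
  ∑ i, ∑ j, if i < j then Jc i j * spin (σ i) * spin (σ j) else 0

/-- The one-body energy `∑_a √(q_a − q_{a−1}) ∑_i J_i^a σ_i`. -/
def fieldEnergy {N K : ℕ} (q : ℕ → ℝ) (Js : Fin K → Fin N → ℝ) (σ : Fin N → Bool) : ℝ :=
  ∑ a : Fin K, Real.sqrt (q (a.val + 1) - q a.val) * ∑ i, Js a i * spin (σ i)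

theorem abs_spin (b : Bool) : |spin b| = 1 := by
  cases b <;> simp [spin]

section Gibbs

variable {N K : ℕ} {β h : ℝ} {q : ℕ → ℝ}

theorem abs_pairEnergy_le (Jc : Fin N → Fin N → ℝ) (σ : Fin N → Bool) :
    |pairEnergy Jc σ| ≤ N * N * ‖Jc‖ := by
  have term_le (i j : Fin N) :
      |if i < j then Jc i j * spin (σ i) * spin (σ j) else 0| ≤ ‖Jc‖ := by
    split_ifs
    · rw [abs_mul, abs_mul, abs_spin, abs_spin, mul_one, mul_one]
      exact (norm_le_pi_norm (Jc i) j).trans (norm_le_pi_norm Jc i)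
    · simp
  calc |pairEnergy Jc σ| ≤ ∑ i, ∑ j, |if i < j then Jc i j * spin (σ i) * spin (σ j) else 0| :=
        (Finset.abs_sum_le_sum_abs _ _).trans
          (Finset.sum_le_sum fun i _ ↦ Finset.abs_sum_le_sum_abs _ _)
    _ ≤ ∑ _i : Fin N, ∑ _j : Fin N, ‖Jc‖ := by
        gcongr
        exact term_le _ _
    _ = N * N * ‖Jc‖ := by simp [mul_assoc]

theorem abs_fieldEnergy_le (Js : Fin K → Fin N → ℝ) (σ : Fin N → Bool) :
    |fieldEnergy q Js σ| ≤
      (∑ a : Fin K, Real.sqrt (q (a.val + 1) - q a.val) * N) * ‖Js‖ := by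
  have row_le (a : Fin K) : |∑ i, Js a i * spin (σ i)| ≤ N * ‖Js‖ :=
    calc |∑ i, Js a i * spin (σ i)| ≤ ∑ i, |Js a i * spin (σ i)| := Finset.abs_sum_le_sum_abs _ _
      _ ≤ ∑ _i : Fin N, ‖Js‖ := Finset.sum_le_sum fun i _ ↦ by
        rw [abs_mul, abs_spin, mul_one]
        exact (norm_le_pi_norm (Js a) i).trans (norm_le_pi_norm Js a)
      _ = N * ‖Js‖ := by simp
  calc |fieldEnergy q Js σ|
      ≤ ∑ a : Fin K, |Real.sqrt (q (a.val + 1) - q a.val) * ∑ i, Js a i * spin (σ i)| :=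
        Finset.abs_sum_le_sum_abs _ _
    _ ≤ ∑ a : Fin K, Real.sqrt (q (a.val + 1) - q a.val) * (N * ‖Js‖) := by
        gcongr with a
        rw [abs_mul, abs_of_nonneg (Real.sqrt_nonneg _)]
        gcongr
        exact row_le a
    _ = _ := by simp only [← mul_assoc, Finset.sum_mul]

theorem measurable_pairEnergy (σ : Fin N → Bool) :
    Measurable fun Jc : Fin N → Fin N → ℝ ↦ pairEnergy Jc σ := by
  unfold pairEnergy
  refine Finset.measurable_fun_sum _ fun i _ ↦ Finset.measurable_fun_sum _ fun j _ ↦ ?_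
  split_ifs <;> fun_prop

theorem measurable_fieldEnergy (σ : Fin N → Bool) :
    Measurable fun Js : Fin K → Fin N → ℝ ↦ fieldEnergy q Js σ := by
  unfold fieldEnergy
  fun_prop

theorem hasExpGrowth_pairEnergy {T : Type*} {l : Filter T} (σ : Fin N → Bool) :
    HasExpGrowth l fun _ (J : Disorder N K) ↦ pairEnergy J.1 σ :=
  .of_abs_le_mul_norm ((measurable_pairEnergy σ).comp measurable_fst)
    fun J ↦ (abs_pairEnergy_le J.1 σ).trans (by gcongr; exact norm_fst_le J)

theorem hasExpGrowth_fieldEnergy {T : Type*} {l : Filter T} (σ : Fin N → Bool) :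
    HasExpGrowth l fun _ (J : Disorder N K) ↦ fieldEnergy q J.2 σ :=
  .of_abs_le_mul_norm ((measurable_fieldEnergy σ).comp measurable_snd)
    fun J ↦ (abs_fieldEnergy_le J.2 σ).trans (by gcongr; exact norm_snd_le J)

theorem hasTwoSidedExpGrowth_bFac (t : ℝ) (σ : Fin N → Bool) :
    HasTwoSidedExpGrowth (nhds t) fun s (J : Disorder N K) ↦ bFac N K β h s q J.1 J.2 σ := by
  have hpair : HasTwoSidedExpGrowth (nhds t) fun s (J : Disorder N K) ↦
      Real.exp (β * Real.sqrt (s / N) * pairEnergy J.1 σ) :=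
    .exp_mul ((Continuous.tendsto (by fun_prop) t).isBigO_one ℝ)
      ((measurable_pairEnergy σ).comp measurable_fst)
      fun J ↦ (abs_pairEnergy_le J.1 σ).trans (by gcongr; exact norm_fst_le J)
  have hfield : HasTwoSidedExpGrowth (nhds t) fun s (J : Disorder N K) ↦
      Real.exp (β * Real.sqrt (1 - s) * fieldEnergy q J.2 σ) :=
    .exp_mul ((Continuous.tendsto (by fun_prop) t).isBigO_one ℝ)
      ((measurable_fieldEnergy σ).comp measurable_snd)
      fun J ↦ (abs_fieldEnergy_le J.2 σ).trans (by gcongr; exact norm_snd_le J)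
  simpa only [← Real.exp_add] using!
    (hpair.mul (.const (Real.exp_pos (β * h * ∑ i, spin (σ i))))).mul hfield

theorem hasTwoSidedExpGrowth_Ztil (t : ℝ) :
    HasTwoSidedExpGrowth (nhds t) fun s (J : Disorder N K) ↦ Ztil N K β h s q J.1 J.2 :=
  .sum Finset.univ_nonempty fun σ _ ↦ hasTwoSidedExpGrowth_bFac t σ

theorem hasExpGrowth_gibbs {t : ℝ} {A : Disorder N K → (Fin N → Bool) → ℝ}
    (hA : ∀ σ, HasExpGrowth (nhds t) fun _ J ↦ A J σ) :
    HasExpGrowth (nhds t) fun s J ↦ gibbs N K β h s q (A J) J.1 J.2 := by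
  simp only [gibbs, div_eq_mul_inv]
  exact (HasExpGrowth.sum _ fun σ _ ↦ (hA σ).mul (hasTwoSidedExpGrowth_bFac t σ).hasExpGrowth).mul
    (hasTwoSidedExpGrowth_Ztil t).inv

theorem gibbs_sum {ι : Type*} (s : Finset ι) {t : ℝ} (A : ι → (Fin N → Bool) → ℝ)
    (Jc : Fin N → Fin N → ℝ) (Js : Fin K → Fin N → ℝ) :
    gibbs N K β h t q (fun σ ↦ ∑ i ∈ s, A i σ) Jc Js =
      ∑ i ∈ s, gibbs N K β h t q (A i) Jc Js := by
  simp only [gibbs, Finset.sum_mul, ← Finset.sum_div]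
  rw [Finset.sum_comm]

theorem gibbs_const_mul {t : ℝ} (c : ℝ) (A : (Fin N → Bool) → ℝ)
    (Jc : Fin N → Fin N → ℝ) (Js : Fin K → Fin N → ℝ) :
    gibbs N K β h t q (fun σ ↦ c * A σ) Jc Js = c * gibbs N K β h t q A Jc Js := by
  simp only [gibbs, mul_assoc, ← Finset.mul_sum, mul_div_assoc]

theorem gibbs_pairEnergy (t : ℝ) (Jc : Fin N → Fin N → ℝ) (Js : Fin K → Fin N → ℝ) :
    gibbs N K β h t q (pairEnergy Jc) Jc Js = ∑ i, ∑ j, if i < j then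
      Jc i j * gibbs N K β h t q (fun σ ↦ spin (σ i) * spin (σ j)) Jc Js else 0 := by
  have hpair : pairEnergy Jc = fun σ ↦
      ∑ i, ∑ j, (if i < j then Jc i j else 0) * (spin (σ i) * spin (σ j)) := by
    funext σ
    simp only [pairEnergy, ite_mul, zero_mul, mul_assoc]
  rw [hpair]
  simp only [gibbs_sum, gibbs_const_mul]
  simp only [ite_mul, zero_mul]

theorem gibbs_fieldEnergy (t : ℝ) (Jc : Fin N → Fin N → ℝ) (Js : Fin K → Fin N → ℝ) :
    gibbs N K β h t q (fieldEnergy q Js) Jc Js =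
      ∑ a : Fin K, Real.sqrt (q (a.val + 1) - q a.val) *
        ∑ i, Js a i * gibbs N K β h t q (fun σ ↦ spin (σ i)) Jc Js := by
  simp only [funext (fieldEnergy.eq_1 q Js), gibbs_sum, gibbs_const_mul]

/-- The logarithmic derivative `Z̃_N⁻¹ ∂_t Z̃_N`, written with the Gibbs averages of the two
energies rather than of the spin products. -/
def logDerivZtil (N K : ℕ) (β h t : ℝ) (q : ℕ → ℝ) (Jc : Fin N → Fin N → ℝ)
    (Js : Fin K → Fin N → ℝ) : ℝ :=
  β / (2 * Real.sqrt (t * N)) * gibbs N K β h t q (pairEnergy Jc) Jc Js -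
    β / (2 * Real.sqrt (1 - t)) * gibbs N K β h t q (fieldEnergy q Js) Jc Js

theorem hasExpGrowth_logDerivZtil (hN : 0 < N) {t : ℝ} (ht : t ∈ Set.Ioo (0 : ℝ) 1) :
    HasExpGrowth (nhds t) fun s (J : Disorder N K) ↦ logDerivZtil N K β h s q J.1 J.2 := by
  have coeff {f : ℝ → ℝ} (hf : Continuous f) (h0 : 0 < f t) :
      HasExpGrowth (nhds t) fun s (_ : Disorder N K) ↦ β / (2 * Real.sqrt (f s)) :=
    .of_isBigO_one <| Tendsto.isBigO_one ℝ <|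
      tendsto_const_nhds.div (Continuous.tendsto (by fun_prop) t) (by positivity)
  have hN' : (0 : ℝ) < N := Nat.cast_pos.2 hN
  exact ((coeff (f := (· * (N : ℝ))) (by fun_prop) (mul_pos ht.1 hN')).mul
    (hasExpGrowth_gibbs hasExpGrowth_pairEnergy)).sub
    ((coeff (f := (1 - ·)) (by fun_prop) (sub_pos.2 ht.2)).mul
      (hasExpGrowth_gibbs hasExpGrowth_fieldEnergy))

theorem hasDerivAt_sqrt_div_const {c t : ℝ} (hc : 0 < c) (ht : 0 < t) :
    HasDerivAt (fun s ↦ Real.sqrt (s / c)) (1 / (2 * Real.sqrt (t * c))) t := by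
  have hsqrt : Real.sqrt (t * c) = c * Real.sqrt (t / c) := by
    rw [show t * c = c ^ 2 * (t / c) by field_simp, Real.sqrt_mul (sq_nonneg c),
      Real.sqrt_sq hc.le]
  refine (((hasDerivAt_id t).div_const c).sqrt (div_pos ht hc).ne').congr_deriv ?_
  rw [hsqrt, id]
  field_simp

theorem hasDerivAt_bFac (hN : 0 < N) {t : ℝ} (ht : t ∈ Set.Ioo (0 : ℝ) 1)
    (Jc : Fin N → Fin N → ℝ) (Js : Fin K → Fin N → ℝ) (σ : Fin N → Bool) :
    HasDerivAt (fun s ↦ bFac N K β h s q Jc Js σ)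
      ((β / (2 * Real.sqrt (t * N)) * pairEnergy Jc σ -
        β / (2 * Real.sqrt (1 - t)) * fieldEnergy q Js σ) * bFac N K β h t q Jc Js σ) t := by
  have hpair := (hasDerivAt_sqrt_div_const (Nat.cast_pos.2 hN) ht.1).const_mul β
  have hfield := (((hasDerivAt_id t).const_sub 1).sqrt (sub_pos.2 ht.2).ne').const_mul β
  refine (((hpair.mul_const (pairEnergy Jc σ)).add_const (β * h * ∑ i, spin (σ i))).add
    (hfield.mul_const (fieldEnergy q Js σ))).exp.congr_deriv ?_
  rw [mul_comm, bFac]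
  congr 1
  simp only [id]
  ring

theorem hasDerivAt_Ztil (hN : 0 < N) {t : ℝ} (ht : t ∈ Set.Ioo (0 : ℝ) 1)
    (Jc : Fin N → Fin N → ℝ) (Js : Fin K → Fin N → ℝ) :
    HasDerivAt (fun s ↦ Ztil N K β h s q Jc Js)
      (Ztil N K β h t q Jc Js * logDerivZtil N K β h t q Jc Js) t := by
  have hZ : Ztil N K β h t q Jc Js ≠ 0 :=
    ((hasTwoSidedExpGrowth_Ztil t).pos.self_of_nhds (Jc, Js)).ne'
  refine (HasDerivAt.fun_sum fun σ _ ↦ hasDerivAt_bFac hN ht Jc Js σ).congr_deriv ?_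
  have hgibbs (A : (Fin N → Bool) → ℝ) : Ztil N K β h t q Jc Js * gibbs N K β h t q A Jc Js =
      ∑ σ, A σ * bFac N K β h t q Jc Js σ := mul_div_cancel₀ _ hZ
  simp only [logDerivZtil, mul_sub, mul_left_comm (Ztil N K β h t q Jc Js), hgibbs, sub_mul,
    Finset.sum_sub_distrib, Finset.mul_sum, mul_assoc]

end Gibbs

/-! ### The backward recursion -/

section Recursion

variable {N K : ℕ} {β h t : ℝ} {q m : ℕ → ℝ} {j : ℕ}

theorem norm_prodMk_update_le (r : Fin K) (J : Disorder N K) (g : Fin N → ℝ) :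
    ‖((J.1, Function.update J.2 r g) : Disorder N K)‖ ≤ ‖(J, g)‖ := by
  refine max_le ((norm_fst_le J).trans (le_max_left _ _))
    ((pi_norm_le_iff_of_nonneg (norm_nonneg _)).2 fun r' ↦ ?_)
  change ‖Function.update J.2 r g r'‖ ≤ _
  rcases eq_or_ne r' r with rfl | hr
  · rw [Function.update_self]
    exact le_max_right _ _
  · rw [Function.update_of_ne hr]
    exact (norm_le_pi_norm J.2 r').trans ((norm_snd_le J).trans (le_max_left _ _))

theorem measurable_prodMk_update (r : Fin K) :
    Measurable fun p : Disorder N K × (Fin N → ℝ) ↦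
      ((p.1.1, Function.update p.1.2 r p.2) : Disorder N K) :=
  measurable_fst.fst.prodMk <|
    measurable_update'.comp (measurable_fst.snd.prodMk measurable_snd)

section Row

variable {T : Type*} {l : Filter T} {F : T → Disorder N K → ℝ}

theorem HasExpGrowth.comp_update (hF : HasExpGrowth l F) (r : Fin K) :
    HasExpGrowth l fun t (p : Disorder N K × (Fin N → ℝ)) ↦
      F t (p.1.1, Function.update p.1.2 r p.2) :=
  hF.comp (measurable_prodMk_update r) (A := 0) fun p ↦ by
    simpa only [zero_add] using norm_prodMk_update_le r p.1 p.2

theorem HasTwoSidedExpGrowth.comp_update (hF : HasTwoSidedExpGrowth l F) (r : Fin K) :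
    HasTwoSidedExpGrowth l fun t (p : Disorder N K × (Fin N → ℝ)) ↦
      F t (p.1.1, Function.update p.1.2 r p.2) :=
  ⟨hF.pos.mono fun _ ht _ ↦ ht _, hF.hasExpGrowth.comp_update r, hF.inv.comp_update r⟩

end Row

theorem Wrec_succ (hj : j < K) (Jc : Fin N → Fin N → ℝ) (Js : Fin K → Fin N → ℝ) :
    Wrec N K β h t q m (j + 1) Jc Js =
      (∫ g, Wrec N K β h t q m j Jc (Function.update Js (Fin.rev ⟨j, hj⟩) g) ^ m (K - j)
        ∂gaussN N) ^ (m (K - j))⁻¹ := by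
  have hrev : Fin.rev ⟨j, hj⟩ = ⟨K - 1 - j, by omega⟩ := Fin.ext (by simp; omega)
  rw [hrev, Wrec]
  exact dif_pos hj

theorem hasTwoSidedExpGrowth_Wrec (t : ℝ) (hj : j ≤ K) :
    HasTwoSidedExpGrowth (nhds t) fun s (J : Disorder N K) ↦ Wrec N K β h s q m j J.1 J.2 := by
  induction j with
  | zero => exact hasTwoSidedExpGrowth_Ztil t
  | succ j ih =>
    simp only [Wrec_succ hj]
    exact (((ih (by omega)).rpow_const _).comp_update _ |>.integral
      (hasExpMoments_gaussN N)).rpow_const _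

theorem Wrec_pos (hj : j ≤ K) (Jc : Fin N → Fin N → ℝ) (Js : Fin K → Fin N → ℝ) :
    0 < Wrec N K β h t q m j Jc Js :=
  (hasTwoSidedExpGrowth_Wrec t hj).pos.self_of_nhds (Jc, Js)

theorem fWeight_sub (hj : j < K) (Jc : Fin N → Fin N → ℝ) (Js : Fin K → Fin N → ℝ) :
    fWeight N K β h t q m (K - j) Jc Js =
      Wrec N K β h t q m j Jc Js ^ m (K - j) / Wrec N K β h t q m (j + 1) Jc Js ^ m (K - j) := by
  rw [fWeight, Zrec, Zrec, Nat.sub_sub_self hj.le, Nat.sub_sub, Nat.sub_sub_self hj]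

theorem fWeight_sub_eq_div_integral (hj : j < K) (hm : m (K - j) ≠ 0) (Jc : Fin N → Fin N → ℝ)
    (Js : Fin K → Fin N → ℝ) :
    fWeight N K β h t q m (K - j) Jc Js = Wrec N K β h t q m j Jc Js ^ m (K - j) /
      ∫ g, Wrec N K β h t q m j Jc (Function.update Js (Fin.rev ⟨j, hj⟩) g) ^ m (K - j)
        ∂gaussN N := by
  rw [fWeight_sub hj, Wrec_succ hj, Real.rpow_inv_rpow _ hm]
  exact integral_nonneg fun g ↦ Real.rpow_nonneg (Wrec_pos hj.le _ _).le _

theorem hasExpGrowth_fWeight_sub (t : ℝ) (hj : j < K) :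
    HasExpGrowth (nhds t) fun s (J : Disorder N K) ↦ fWeight N K β h s q m (K - j) J.1 J.2 := by
  simp only [fWeight_sub hj, div_eq_mul_inv]
  exact ((hasTwoSidedExpGrowth_Wrec t hj.le).rpow_const _).hasExpGrowth.mul
    ((hasTwoSidedExpGrowth_Wrec t hj).rpow_const _).inv

theorem hasExpGrowth_prod_fWeight (t : ℝ) {a : ℕ} (ha : a ≤ K) :
    HasExpGrowth (nhds t) fun s (J : Disorder N K) ↦
      ∏ b ∈ Finset.Icc 1 a, fWeight N K β h s q m b J.1 J.2 := by
  refine .prod _ fun b hb ↦ ?_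
  obtain ⟨hb1, hba⟩ := Finset.mem_Icc.1 hb
  have hlt : K - b < K := by omega
  simpa only [Nat.sub_sub_self (hba.trans ha)] using hasExpGrowth_fWeight_sub t hlt

/-- `logDerivWrec … j` is the logarithmic derivative in `t` of `Z_{K-j}`: it is
`Z̃_N⁻¹ ∂_t Z̃_N` for `j = 0`, and `Z_{a-1}⁻¹ ∂_t Z_{a-1} = E_a(f_a Z_a⁻¹ ∂_t Z_a)`. The row `a` of
the fields is `Fin.rev j` for `a = K - j`. -/
def logDerivWrec (N K : ℕ) (β h t : ℝ) (q m : ℕ → ℝ) :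
    ℕ → (Fin N → Fin N → ℝ) → (Fin K → Fin N → ℝ) → ℝ
  | 0 => logDerivZtil N K β h t q
  | j + 1 => fun Jc Js ↦
      if hj : j < K then
        ∫ g, fWeight N K β h t q m (K - j) Jc (Function.update Js (Fin.rev ⟨j, hj⟩) g) *
          logDerivWrec N K β h t q m j Jc (Function.update Js (Fin.rev ⟨j, hj⟩) g) ∂gaussN N
      else logDerivWrec N K β h t q m j Jc Js

theorem logDerivWrec_succ (hj : j < K) (Jc : Fin N → Fin N → ℝ) (Js : Fin K → Fin N → ℝ) :
    logDerivWrec N K β h t q m (j + 1) Jc Js =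
      ∫ g, fWeight N K β h t q m (K - j) Jc (Function.update Js (Fin.rev ⟨j, hj⟩) g) *
        logDerivWrec N K β h t q m j Jc (Function.update Js (Fin.rev ⟨j, hj⟩) g) ∂gaussN N := by
  rw [logDerivWrec]
  exact dif_pos hj

theorem hasExpGrowth_logDerivWrec (hN : 0 < N) (ht : t ∈ Set.Ioo (0 : ℝ) 1) (hj : j ≤ K) :
    HasExpGrowth (nhds t) fun s (J : Disorder N K) ↦
      logDerivWrec N K β h s q m j J.1 J.2 := by
  induction j with
  | zero => exact hasExpGrowth_logDerivZtil hN ht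
  | succ j ih =>
    simp only [logDerivWrec_succ hj]
    exact ((hasExpGrowth_fWeight_sub t hj).mul (ih (by omega))).comp_update _ |>.integral
      (hasExpMoments_gaussN N)

theorem hasDerivAt_Wrec (hN : 0 < N) (hm : ∀ a, 1 ≤ a → a ≤ K → m a ≠ 0)
    (ht : t ∈ Set.Ioo (0 : ℝ) 1) (hj : j ≤ K) (Jc : Fin N → Fin N → ℝ)
    (Js : Fin K → Fin N → ℝ) :
    HasDerivAt (fun s ↦ Wrec N K β h s q m j Jc Js)
      (Wrec N K β h t q m j Jc Js * logDerivWrec N K β h t q m j Jc Js) t := by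
  induction j generalizing t Js with
  | zero => exact hasDerivAt_Ztil hN ht Jc Js
  | succ j ih =>
    have hmj : m (K - j) ≠ 0 := hm _ (by omega) (by omega)
    have hW := (hasTwoSidedExpGrowth_Wrec (N := N) (β := β) (h := h) (q := q) (m := m) t
      (Nat.le_of_succ_le hj)).comp_update (Fin.rev ⟨j, hj⟩) |>.comp_prodMk_left (Jc, Js)
    have hD := (hasExpGrowth_logDerivWrec hN (β := β) (h := h) (q := q) (m := m) ht
      (Nat.le_of_succ_le hj)).comp_update (Fin.rev ⟨j, hj⟩) |>.comp_prodMk_left (Jc, Js)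
    simp only [Wrec_succ hj, logDerivWrec_succ hj, fWeight_sub_eq_div_integral hj hmj,
      Function.update_idem]
    refine hW.hasDerivAt_rpow_inv_integral_rpow hD (hasExpMoments_gaussN N) ?_ hmj
    filter_upwards [Ioo_mem_nhds ht.1 ht.2] with s hs g using ih hs (Nat.le_of_succ_le hj) _

theorem setOf_add_lt_subset_insert_rev (hj : j < K) :
    {r : Fin K | r.val + j < K} ⊆ insert (Fin.rev ⟨j, hj⟩) {r | r.val + (j + 1) < K} := by
  intro r (hr : r.val + j < K)
  simp only [Set.mem_insert_iff, Fin.ext_iff, Fin.val_rev, Set.mem_ofPred_eq]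
  omega

theorem dependsOn_Wrec (hj : j ≤ K) (Jc : Fin N → Fin N → ℝ) :
    DependsOn (Wrec N K β h t q m j Jc) {r | r.val + j < K} := by
  induction j with
  | zero => exact fun Js Js' hJ ↦ congrArg _ (funext fun r ↦ hJ r r.isLt)
  | succ j ih =>
    have hrow : DependsOn (fun Js ↦ Wrec N K β h t q m j Jc Js ^ m (K - j))
        (insert (Fin.rev ⟨j, hj⟩) {r | r.val + (j + 1) < K}) := fun Js Js' hJ ↦
      congrArg (· ^ m (K - j)) <|
        ih (Nat.le_of_succ_le hj) fun r hr ↦ hJ r (setOf_add_lt_subset_insert_rev hj hr)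
    intro Js Js' hJ
    rw [Wrec_succ hj, Wrec_succ hj]
    exact congrArg (· ^ (m (K - j))⁻¹) (dependsOn_integral_update hrow (gaussN N) hJ)

theorem dependsOn_prod_fWeight (hj : j ≤ K) (Jc : Fin N → Fin N → ℝ) :
    DependsOn (fun Js ↦ ∏ a ∈ Finset.Icc 1 (K - j), fWeight N K β h t q m a Jc Js)
      {r | r.val + j < K} := by
  intro Js Js' hJ
  refine Finset.prod_congr rfl fun a ha ↦ ?_
  have haj := (Finset.mem_Icc.1 ha).2
  have hZ (b : ℕ) (hb : b ≤ a) : Zrec N K β h t q m b Jc Js = Zrec N K β h t q m b Jc Js' :=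
    dependsOn_Wrec (Nat.sub_le K b) Jc fun r hr ↦ hJ r <| by
      simp only [Set.mem_ofPred_eq] at hr ⊢
      omega
  rw [fWeight, fWeight, hZ a le_rfl, hZ (a - 1) (Nat.sub_le a 1)]

theorem integrable_prod_fWeight_mul_logDerivWrec (hN : 0 < N) (ht : t ∈ Set.Ioo (0 : ℝ) 1)
    (hj : j ≤ K) (Jc : Fin N → Fin N → ℝ) :
    Integrable (fun Js ↦ (∏ a ∈ Finset.Icc 1 (K - j), fWeight N K β h t q m a Jc Js) *
      logDerivWrec N K β h t q m j Jc Js) (gaussS K N) :=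
  (((hasExpGrowth_prod_fWeight t (Nat.sub_le K j)).mul
    (hasExpGrowth_logDerivWrec hN ht hj)).comp_prodMk_left Jc |>.integrable
      (hasExpMoments_gaussS K N)).self_of_nhds

theorem integral_prod_fWeight_mul_logDerivWrec_succ (hN : 0 < N) (ht : t ∈ Set.Ioo (0 : ℝ) 1)
    (hj : j < K) (Jc : Fin N → Fin N → ℝ) :
    ∫ Js, (∏ a ∈ Finset.Icc 1 (K - (j + 1)), fWeight N K β h t q m a Jc Js) *
        logDerivWrec N K β h t q m (j + 1) Jc Js ∂gaussS K N =
      ∫ Js, (∏ a ∈ Finset.Icc 1 (K - j), fWeight N K β h t q m a Jc Js) *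
        logDerivWrec N K β h t q m j Jc Js ∂gaussS K N := by
  have hint := integrable_prod_fWeight_mul_logDerivWrec (β := β) (h := h) (q := q) (m := m)
    hN ht hj.le Jc
  refine .trans (integral_congr_ae (.of_forall fun Js ↦ ?_))
    (integral_integral_update (Fin.rev ⟨j, hj⟩) hint)
  have hprod (g : Fin N → ℝ) :
      ∏ a ∈ Finset.Icc 1 (K - (j + 1)),
          fWeight N K β h t q m a Jc (Function.update Js (Fin.rev ⟨j, hj⟩) g) =
        ∏ a ∈ Finset.Icc 1 (K - (j + 1)), fWeight N K β h t q m a Jc Js :=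
    dependsOn_prod_fWeight hj Jc fun r hr ↦ Function.update_of_ne
      (fun hrj ↦ by simp [hrj, Fin.val_rev] at hr; omega) _ _
  have hK : K - j = K - (j + 1) + 1 := by omega
  simp only [logDerivWrec_succ hj, ← integral_const_mul]
  refine integral_congr_ae (.of_forall fun g ↦ ?_)
  simp only [hK, Finset.prod_Icc_succ_top (Nat.le_add_left 1 _), hprod, mul_assoc]

theorem dependsOn_logDerivWrec (hN : 0 < N) (hm : ∀ a, 1 ≤ a → a ≤ K → m a ≠ 0)
    (ht : t ∈ Set.Ioo (0 : ℝ) 1) (hj : j ≤ K) (Jc : Fin N → Fin N → ℝ) :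
    DependsOn (logDerivWrec N K β h t q m j Jc) {r | r.val + j < K} := by
  intro Js Js' hJ
  have hW (s : ℝ) : Wrec N K β h s q m j Jc Js = Wrec N K β h s q m j Jc Js' :=
    dependsOn_Wrec hj Jc hJ
  have hd := hasDerivAt_Wrec (β := β) (h := h) (q := q) hN hm ht hj Jc Js
  simp only [hW] at hd
  exact mul_left_cancel₀ (Wrec_pos hj Jc Js').ne'
    (hd.unique (hasDerivAt_Wrec hN hm ht hj Jc Js'))

theorem integral_prod_fWeight_mul_logDerivZtil (hN : 0 < N)
    (hm : ∀ a, 1 ≤ a → a ≤ K → m a ≠ 0) (ht : t ∈ Set.Ioo (0 : ℝ) 1)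
    (Jc : Fin N → Fin N → ℝ) :
    ∫ Js, (∏ a ∈ Finset.Icc 1 K, fWeight N K β h t q m a Jc Js) *
      logDerivZtil N K β h t q Jc Js ∂gaussS K N = logDerivWrec N K β h t q m K Jc 0 := by
  have collapse (j : ℕ) (hj : j ≤ K) :
      ∫ Js, (∏ a ∈ Finset.Icc 1 (K - j), fWeight N K β h t q m a Jc Js) *
        logDerivWrec N K β h t q m j Jc Js ∂gaussS K N =
      ∫ Js, (∏ a ∈ Finset.Icc 1 K, fWeight N K β h t q m a Jc Js) *
        logDerivZtil N K β h t q Jc Js ∂gaussS K N := by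
    induction j with
    | zero => rfl
    | succ j ih =>
      rw [integral_prod_fWeight_mul_logDerivWrec_succ hN ht hj, ih (Nat.le_of_succ_le hj)]
  have hconst (Js : Fin K → Fin N → ℝ) :
      logDerivWrec N K β h t q m K Jc Js = logDerivWrec N K β h t q m K Jc 0 :=
    dependsOn_logDerivWrec hN hm ht le_rfl Jc fun r hr ↦ by simp at hr
  rw [← collapse K le_rfl]
  simp [hconst]

theorem hasDerivAt_integral_log_Wrec (hN : 0 < N) (hm : ∀ a, 1 ≤ a → a ≤ K → m a ≠ 0)
    (ht : t ∈ Set.Ioo (0 : ℝ) 1) (hj : j ≤ K) (Js : Fin K → Fin N → ℝ) :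
    HasDerivAt (fun s ↦ ∫ Jc, Real.log (Wrec N K β h s q m j Jc Js) ∂gaussC N)
      (∫ Jc, logDerivWrec N K β h t q m j Jc Js ∂gaussC N) t := by
  refine ((hasTwoSidedExpGrowth_Wrec t hj).log.comp_prodMk_right Js).hasDerivAt_integral
    ((hasExpGrowth_logDerivWrec hN ht hj).comp_prodMk_right Js) (hasExpMoments_gaussC N) ?_
  filter_upwards [Ioo_mem_nhds ht.1 ht.2] with s hs Jc
  have hW : Wrec N K β h s q m j Jc Js ≠ 0 := (Wrec_pos hj Jc Js).ne'
  exact ((hasDerivAt_Wrec hN hm hs hj Jc Js).log hW).congr_deriv (mul_div_cancel_left₀ _ hW)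

end Recursion

theorem atilde_hasDerivAt_general (N K : ℕ) (hN : 1 ≤ N) (q m : ℕ → ℝ)
    (hq : ∀ a, a < K → q a ≤ q (a + 1)) (hm : ∀ a, 1 ≤ a → a ≤ K → m a ≠ 0) (β h : ℝ)
    (t : ℝ) (ht : t ∈ Set.Ioo (0 : ℝ) 1) :
    HasDerivAt (atilde N K β h q m)
      ((N : ℝ)⁻¹ * ∫ Jc, ∫ Js,
          (∏ a ∈ Finset.Icc 1 K, fWeight N K β h t q m a Jc Js) *
            (β / (2 * Real.sqrt (t * N)) *
                ∑ i, ∑ j, (if i < j then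
                  Jc i j * gibbs N K β h t q (fun σ => spin (σ i) * spin (σ j)) Jc Js
                  else 0)
              - β / (2 * Real.sqrt (1 - t)) *
                  ∑ a : Fin K, Real.sqrt (q (a.val + 1) - q a.val) *
                    ∑ i, Js a i * gibbs N K β h t q (fun σ => spin (σ i)) Jc Js)
        ∂gaussS K N ∂gaussC N) t := by
  simp only [← gibbs_pairEnergy, ← gibbs_fieldEnergy]
  change HasDerivAt _ ((N : ℝ)⁻¹ * ∫ Jc, ∫ Js,
    (∏ a ∈ Finset.Icc 1 K, fWeight N K β h t q m a Jc Js) * logDerivZtil N K β h t q Jc Js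
      ∂gaussS K N ∂gaussC N) t
  simp only [integral_prod_fWeight_mul_logDerivZtil hN hm ht]
  exact (hasDerivAt_integral_log_Wrec hN hm ht le_rfl 0).const_mul _

/-- for `t ∈ (0,1)`, the interpolating free energy is differentiable
in `t` with
`d/dt α̃_N(t) = N⁻¹ E(f_1 ⋯ f_K · Z̃_N⁻¹ ∂_t Z̃_N)`, where
`Z̃_N⁻¹ ∂_t Z̃_N = (β/(2√(tN))) ∑_{i<j} J_{ij} ω(σ_i σ_j)
  − (β/(2√(1−t))) ∑_a √(q_a − q_{a−1}) ∑_i J_i^a ω(σ_i)`. -/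
theorem atilde_hasDerivAt (N : ℕ) (hN : 1 ≤ N) (X : OrderParam)
    (hm : ∀ a, 1 ≤ a → a ≤ X.K → 0 < X.m a) (β h : ℝ) (hβ : 0 ≤ β)
    (t : ℝ) (ht : t ∈ Set.Ioo (0 : ℝ) 1) :
    HasDerivAt (atilde N X.K β h X.q X.m)
      ((N : ℝ)⁻¹ * ∫ Jc, ∫ Js,
          (∏ a ∈ Finset.Icc 1 X.K, fWeight N X.K β h t X.q X.m a Jc Js) *
            (β / (2 * Real.sqrt (t * N)) *
                ∑ i, ∑ j, (if i < j then
                  Jc i j * gibbs N X.K β h t X.q (fun σ => spin (σ i) * spin (σ j)) Jc Js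
                  else 0)
              - β / (2 * Real.sqrt (1 - t)) *
                  ∑ a : Fin X.K, Real.sqrt (X.q (a.val + 1) - X.q a.val) *
                    ∑ i, Js a i * gibbs N X.K β h t X.q (fun σ => spin (σ i)) Jc Js)
        ∂gaussS X.K N ∂gaussC N) t := by
  exact atilde_hasDerivAt_general N X.K hN X.q X.m X.hq_mono
    (fun a h1 hK ↦ (hm a h1 hK).ne') β h t ht

end
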